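/- Let Γ be a distance-regular graph of diameter D ≥ 3 with classical parameters (D, b, α, β), where b is an integer with b ≠ 0 and b ≠ −1. Then θ = −1 + b_1/b is an eigenvalue of the adjacency matrix of Γ and is of classical b-type; in particular, the b-distance matrix 𝔻_b of Γ has exactly three distinct eigenvalues, of which one is equal to 0. -/

import Mathlib

/-- `G` is a distance-regular graph of diameter `D` with intersection numbers
`p h i j = p^h_{ij}`: for any two vertices `x, y` at distance `h`, the number of
vertices `z` with `d(x,z) = i` and `d(y,z) = j` equals `p h i j`. -/
structure IsDRG {V : Type*} [Fintype V] (G : SimpleGraph V) (D : ℕ)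
    (p : ℕ → ℕ → ℕ → ℕ) : Prop where
  connected : G.Connected
  dist_le : ∀ x y : V, G.dist x y ≤ D
  exists_dist_eq : ∃ x y : V, G.dist x y = D
  inter : ∀ h i j : ℕ, h ≤ D → i ≤ D → j ≤ D → ∀ x y : V, G.dist x y = h →
    {z : V | G.dist x z = i ∧ G.dist y z = j}.ncard = p h i j

/-- `u` is the standard sequence of `θ` for a distance-regular graph with
intersection numbers `p` (so valency `k = b₀ = p 0 1 1`, `cᵢ = p i 1 (i-1)`,
`aᵢ = p i 1 i`, `bᵢ = p i 1 (i+1)`). -/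
def IsStdSeq (D : ℕ) (p : ℕ → ℕ → ℕ → ℕ) (θ : ℝ) (u : ℕ → ℝ) : Prop :=
  u 0 = 1 ∧ u 1 = θ / (p 0 1 1 : ℝ) ∧
    ∀ i : ℕ, 1 ≤ i → i ≤ D - 1 →
      (p i 1 (i - 1) : ℝ) * u (i - 1) + (p i 1 i : ℝ) * u i
          + (p i 1 (i + 1) : ℝ) * u (i + 1) = θ * u i

/-- The sequence `u` (a standard sequence) is of classical `q`-type:
`u i = (1/q) * u (i-1) + c` for `i = 1, …, D`, for some real `c`. -/
def IsClassicalQType (D : ℕ) (q : ℝ) (u : ℕ → ℝ) : Prop :=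
  ∃ c : ℝ, ∀ i : ℕ, 1 ≤ i → i ≤ D → u i = (1 / q) * u (i - 1) + c

/-- `θ` is an eigenvalue of the adjacency matrix of `G`. -/
def IsAdjEigenval {V : Type*} [Fintype V] (G : SimpleGraph V) [DecidableRel G.Adj]
    (θ : ℝ) : Prop :=
  ∃ v : V → ℝ, v ≠ 0 ∧ (G.adjMatrix ℝ).mulVec v = θ • v

/-- The `q`-distance matrix of a graph `G`: the `(x,y)` entry is
`∑_{j=0}^{d(x,y)-1} q^{-j}` (and `0` on the diagonal, since `d(x,x) = 0`). -/
noncomputable def qDistMatrix {V : Type*} [Fintype V] (G : SimpleGraph V) (q : ℝ) :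
    Matrix V V ℝ :=
  Matrix.of fun x y => ∑ j ∈ Finset.range (G.dist x y), (1 / q) ^ j

/-- `θ` is an eigenvalue of the real matrix `M`. -/
def IsEigenval {n : Type*} [Fintype n] (M : Matrix n n ℝ) (θ : ℝ) : Prop :=
  ∃ v : n → ℝ, v ≠ 0 ∧ M.mulVec v = θ • v

/-- The Gaussian coefficient `[j]_b = 1 + b + b² + ⋯ + b^(j-1)` (with `[0]_b = 0`),
as a real number. -/
def gaussCoeff (b : ℤ) (j : ℕ) : ℝ :=
  ∑ i ∈ Finset.range j, (b : ℝ) ^ i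


lemma aux_gauss_succ (b : ℤ) (m : ℕ) : gaussCoeff b (m+1) = 1 + b * gaussCoeff b m := by
  unfold gaussCoeff
  rw [Finset.sum_range_succ', Finset.mul_sum]
  simp only [pow_succ', pow_zero]
  ring

lemma aux_gauss_pow (b : ℤ) (m : ℕ) : (b:ℝ)^m = 1 + (b - 1) * gaussCoeff b m := by
  have h := aux_gauss_succ b m
  have h2 : gaussCoeff b (m+1) = gaussCoeff b m + (b:ℝ)^m := by
    unfold gaussCoeff; rw [Finset.sum_range_succ]
  linarith

lemma aux_f (b : ℤ) (hb : (b:ℝ) ≠ 0) (m : ℕ) :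
    ∑ j ∈ Finset.range (m+1), (1/(b:ℝ))^j = gaussCoeff b (m+1) / (b:ℝ)^m := by
  induction m with
  | zero => simp [gaussCoeff]
  | succ m ih =>
    rw [Finset.sum_range_succ, ih, aux_gauss_succ b (m+1), one_div, inv_pow, pow_succ]
    field_simp
    ring

/-- the sequence -/
noncomputable def auxU (b : ℤ) (t : ℝ) (i : ℕ) : ℝ :=
  1 - t * ∑ j ∈ Finset.range i, (1/(b:ℝ))^j

lemma aux_rec (b : ℤ) (hb : (b:ℝ) ≠ 0) (D m : ℕ) (α β k θ c bi t : ℝ) (hk : k ≠ 0)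
    (ht : t = 1 - θ / k)
    (hkk : k = gaussCoeff b D * β)
    (hθ : θ = -1 + (gaussCoeff b D - 1) * (β - α) / b)
    (hc : c = gaussCoeff b (m+1) * (1 + α * gaussCoeff b m))
    (hbi : bi = (gaussCoeff b D - gaussCoeff b (m+1)) * (β - α * gaussCoeff b (m+1))) :
    c * auxU b t m + (k - c - bi) * auxU b t (m+1) + bi * auxU b t (m+2)
      = θ * auxU b t (m+1) := by
  have e1 : auxU b t m = auxU b t (m+1) + t * (1/(b:ℝ))^m := by
    unfold auxU; rw [Finset.sum_range_succ]; ring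
  have e2 : auxU b t (m+2) = auxU b t (m+1) - t * (1/(b:ℝ))^(m+1) := by
    unfold auxU; rw [Finset.sum_range_succ _ (m+1)]; ring
  have e3 : auxU b t (m+1) = 1 - t * (gaussCoeff b (m+1) / (b:ℝ)^m) := by
    unfold auxU; rw [aux_f b hb]
  have hR : (b:ℝ)^m ≠ 0 := pow_ne_zero _ hb
  have hp := aux_gauss_pow b m
  have hg := aux_gauss_succ b m
  have key : bi - b * c = k * (b * (b:ℝ)^m) + b * (θ - k) * gaussCoeff b (m+1) := by
    have : b * θ = -b + (gaussCoeff b D - 1) * (β - α) := by rw [hθ]; field_simp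
    have h2 : b * (θ - k) = -b + (gaussCoeff b D - 1) * (β - α) - b * k := by linarith
    rw [h2, hp, hg, hbi, hc, hg, hkk]
    ring
  have htk : t * k = k - θ := by rw [ht]; field_simp
  have hθ' : θ = k - t * k := by linarith
  have key2 : bi = b * c + k * (b * (b:ℝ)^m) - b * (t*k) * gaussCoeff b (m+1) := by
    rw [htk]; linarith
  rw [e1, e2, e3, hθ']
  rw [key2]
  simp only [one_div, inv_pow, pow_succ]
  field_simp
  ring

section
variable {V : Type*} [Fintype V] {G : SimpleGraph V}

lemma aux_step (hG : G.Connected) {x y : V} {n : ℕ} (h : G.dist x y = n+1) :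
    ∃ x', G.Adj x x' ∧ G.dist x' y = n := by
  obtain ⟨w, hw⟩ := (hG x y).exists_walk_length_eq_dist
  cases w with
  | nil => simp at h
  | @cons _ v _ hadj w' =>
    refine ⟨v, hadj, ?_⟩
    simp only [SimpleGraph.Walk.length_cons] at hw
    have h1 := SimpleGraph.dist_le w'
    have h2 := hG.dist_triangle (u := x) (v := v) (w := y)
    have h3 : G.dist x v = 1 := SimpleGraph.dist_eq_one_iff_adj.2 hadj
    omega

lemma aux_real {D : ℕ} {p : ℕ → ℕ → ℕ → ℕ} (hdrg : IsDRG G D p) (j : ℕ) :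
    ∀ i, i + j = D → ∃ x y : V, G.dist x y = i := by
  induction j with
  | zero => intro i hi; obtain ⟨x, y, h⟩ := hdrg.exists_dist_eq; exact ⟨x, y, by omega⟩
  | succ j ih =>
    intro i hi
    obtain ⟨x, y, h⟩ := ih (i+1) (by omega)
    obtain ⟨x', _, h'⟩ := aux_step hdrg.connected h
    exact ⟨x', y, h'⟩

lemma aux_count [DecidableRel G.Adj] (x y : V) (j : ℕ) :
    {z : V | G.dist x z = 1 ∧ G.dist y z = j}.ncard
      = ((G.neighborFinset x).filter (fun z => G.dist z y = j)).card := by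
  rw [← Set.ncard_coe_finset]
  congr 1
  ext z
  simp [SimpleGraph.dist_eq_one_iff_adj, SimpleGraph.dist_comm (u := y)]

lemma aux_sum [DecidableRel G.Adj] (hG : G.Connected) (x y : V) (m : ℕ)
    (h : G.dist x y = m+1) (g : ℕ → ℝ) :
    ∑ z ∈ G.neighborFinset x, g (G.dist z y)
      = {z : V | G.dist x z = 1 ∧ G.dist y z = m}.ncard * g m
        + {z : V | G.dist x z = 1 ∧ G.dist y z = m+1}.ncard * g (m+1)
        + {z : V | G.dist x z = 1 ∧ G.dist y z = m+2}.ncard * g (m+2) := by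
  have : ∀ z ∈ G.neighborFinset x, g (G.dist z y) =
      (if G.dist z y = m then g m else 0) + (if G.dist z y = m+1 then g (m+1) else 0)
       + (if G.dist z y = m+2 then g (m+2) else 0) := by
    intro z hz
    have hadj : G.Adj x z := by simpa using hz
    have h3 : G.dist x z = 1 := SimpleGraph.dist_eq_one_iff_adj.2 hadj
    have h4 : G.dist z x = 1 := SimpleGraph.dist_eq_one_iff_adj.2 hadj.symm
    have h1 := hG.dist_triangle (u := x) (v := z) (w := y)
    have h2 := hG.dist_triangle (u := z) (v := x) (w := y)
    have : G.dist z y = m ∨ G.dist z y = m+1 ∨ G.dist z y = m+2 := by omega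
    rcases this with h | h | h <;> simp [h]
  rw [Finset.sum_congr rfl this]
  simp only [Finset.sum_add_distrib, aux_count, ← Finset.sum_filter, Finset.sum_const,
    nsmul_eq_mul]

lemma aux_deg [DecidableRel G.Adj] {D : ℕ} {p : ℕ → ℕ → ℕ → ℕ} (hdrg : IsDRG G D p)
    (hD : 3 ≤ D) (x : V) : (G.neighborFinset x).card = p 0 1 1 := by
  rw [← hdrg.inter 0 1 1 (by omega) (by omega) (by omega) x x (by simp), aux_count]
  congr 1
  ext z
  simp only [SimpleGraph.mem_neighborFinset, Finset.mem_filter]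
  constructor
  · intro h; exact ⟨h, SimpleGraph.dist_eq_one_iff_adj.2 h.symm⟩
  · exact fun h => h.1

/-- uniqueness -/
lemma aux_uniq [DecidableRel G.Adj] (hG : G.Connected) (θ : ℝ) (F : V → V → ℝ)
    (hF : ∀ x y x' y', G.dist x y = G.dist x' y' → F x y = F x' y')
    (h0 : ∀ x, F x x = 0)
    (hA : ∀ x y, ∑ z ∈ G.neighborFinset x, F z y = θ * F x y) :
    ∀ n x y, G.dist x y = n → F x y = 0 := by
  intro n
  induction n using Nat.strong_induction_on with
  | _ n ih =>
    intro x y hxy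
    cases n with
    | zero => rw [hG.dist_eq_zero_iff.1 hxy]; exact h0 y
    | succ n =>
      obtain ⟨x', hadj, h'⟩ := aux_step hG hxy
      have h1 := hA x' y
      rw [ih n (by omega) x' y h', mul_zero] at h1
      have h2 : ∀ z ∈ G.neighborFinset x', F z y = if G.dist z y = n+1 then F x y else 0 := by
        intro z hz
        have hadj' : G.Adj x' z := by simpa using hz
        split_ifs with hz'
        · exact hF _ _ _ _ (by rw [hz', hxy])
        · have h4 : G.dist z x' = 1 := SimpleGraph.dist_eq_one_iff_adj.2 hadj'.symm
          have h2 := hG.dist_triangle (u := z) (v := x') (w := y)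
          exact ih (G.dist z y) (by omega) z y rfl
      rw [Finset.sum_congr rfl h2, ← Finset.sum_filter, Finset.sum_const, nsmul_eq_mul] at h1
      rcases mul_eq_zero.1 h1 with h | h
      · exfalso
        have h3 : (G.neighborFinset x').filter (fun z => G.dist z y = n+1) = ∅ := by
          simpa using h
        have : x ∈ (G.neighborFinset x').filter (fun z => G.dist z y = n+1) := by
          simp [hadj.symm, hxy]
        rw [h3] at this
        simp at this
      · exact h

lemma aux_sq {D : ℕ} {p : ℕ → ℕ → ℕ → ℕ} (hdrg : IsDRG G D p) (u : ℕ → ℝ) (x y : V) :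
    ∑ z, u (G.dist x z) * u (G.dist z y) =
      ∑ i ∈ Finset.range (D+1), ∑ j ∈ Finset.range (D+1),
        (p (G.dist x y) i j : ℝ) * (u i * u j) := by
  classical
  have : ∀ i ∈ Finset.range (D+1), ∀ j ∈ Finset.range (D+1),
      (p (G.dist x y) i j : ℝ) * (u i * u j) =
       ∑ z, if G.dist x z = i ∧ G.dist z y = j then u i * u j else 0 := by
    intro i hi j hj
    rw [← hdrg.inter _ i j (hdrg.dist_le x y) (by simpa [Nat.lt_succ_iff] using hi)
      (by simpa [Nat.lt_succ_iff] using hj) x y rfl]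
    rw [← Finset.sum_filter, Finset.sum_const, nsmul_eq_mul, ← Set.ncard_coe_finset]
    congr 4
    ext z
    simp [SimpleGraph.dist_comm (u := y)]
  rw [Finset.sum_congr rfl (fun i hi => Finset.sum_congr rfl (this i hi))]
  rw [Finset.sum_congr rfl (fun i _ => Finset.sum_comm), Finset.sum_comm]
  refine Finset.sum_congr rfl fun z _ => ?_
  have h1 := Nat.lt_succ_iff.2 (hdrg.dist_le x z)
  have h2 := Nat.lt_succ_iff.2 (hdrg.dist_le z y)
  rw [Finset.sum_eq_single (G.dist x z), Finset.sum_eq_single (G.dist z y)]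
  · simp
  · intro j _ hj; simp [hj.symm]
  · intro h; simp at h; omega
  · intro j _ hj; simp [hj.symm]
  · intro h; simp at h; omega

end

/-- Let `Γ` be a distance-regular graph of diameter `D ≥ 3` with classical parameters
`(D, b, α, β)` (`b` an integer, `b ≠ 0, -1`). Then `θ = -1 + b₁/b` is an eigenvalue of `Γ`
of classical `b`-type; in particular the `b`-distance matrix has exactly three distinct
eigenvalues, one of which is `0`. -/
theorem stmt8 {V : Type*} [Fintype V] (G : SimpleGraph V) [DecidableRel G.Adj]
    (D : ℕ) (p : ℕ → ℕ → ℕ → ℕ) (hdrg : IsDRG G D p) (hD : 3 ≤ D)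
    (b : ℤ) (hb0 : b ≠ 0) (hb1 : b ≠ -1) (α β : ℝ)
    (hc : ∀ i : ℕ, i ≤ D →
      (p i 1 (i - 1) : ℝ) = gaussCoeff b i * (1 + α * gaussCoeff b (i - 1)))
    (hbi : ∀ i : ℕ, i ≤ D →
      (p i 1 (i + 1) : ℝ) = (gaussCoeff b D - gaussCoeff b i) * (β - α * gaussCoeff b i)) :
    IsAdjEigenval G (-1 + (p 1 1 2 : ℝ) / (b : ℝ)) ∧
      (∃ u : ℕ → ℝ, IsStdSeq D p (-1 + (p 1 1 2 : ℝ) / (b : ℝ)) u ∧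
        IsClassicalQType D (b : ℝ) u) ∧
      (∃ a a' : ℝ, a ≠ a' ∧ a ≠ 0 ∧ a' ≠ 0 ∧
        {η : ℝ | IsEigenval (qDistMatrix G (b : ℝ)) η} = {a, a', 0}) := by
  classical
  have hG := hdrg.connected
  have hbR : (b:ℝ) ≠ 0 := by exact_mod_cast hb0
  obtain ⟨x1, y1, h1⟩ := aux_real hdrg (D-1) 1 (by omega)
  obtain ⟨x2, y2, h2⟩ := aux_real hdrg (D-2) 2 (by omega)
  have hkpos : 0 < p 0 1 1 := by
    rw [← aux_deg hdrg hD x1, Finset.card_pos]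
    exact ⟨y1, by simpa using SimpleGraph.dist_eq_one_iff_adj.1 h1⟩
  set k : ℝ := (p 0 1 1 : ℝ) with hk
  have hk0 : 0 < k := by rw [hk]; exact_mod_cast hkpos
  have hb1k : (p 1 1 2 : ℝ) ≤ k := by
    rw [hk, ← aux_deg hdrg hD x1,
      ← hdrg.inter 1 1 2 (by omega) (by omega) (by omega) x1 y1 h1, aux_count]
    exact_mod_cast Finset.card_filter_le _ _
  set θ : ℝ := -1 + (p 1 1 2 : ℝ) / (b : ℝ) with hθ
  have hθk : θ < k := by
    have hdiv : (p 1 1 2 : ℝ) / (b:ℝ) ≤ (p 1 1 2 : ℝ) := by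
      rcases lt_or_gt_of_ne hb0 with h | h
      · have : (b:ℝ) < 0 := by exact_mod_cast h
        exact (div_nonpos_of_nonneg_of_nonpos (Nat.cast_nonneg _) this.le).trans
          (Nat.cast_nonneg _)
      · have : (1:ℝ) ≤ b := by exact_mod_cast h
        exact div_le_self (Nat.cast_nonneg _) this
    rw [hθ]; linarith
  have g1 : gaussCoeff b 1 = 1 := by simp [gaussCoeff]
  have g0 : gaussCoeff b 0 = 0 := by simp [gaussCoeff]
  have hkk : k = gaussCoeff b D * β := by
    have := hbi 0 (by omega)
    rw [g0] at this
    simpa using this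
  have hθ' : θ = -1 + (gaussCoeff b D - 1) * (β - α) / b := by
    have := hbi 1 (by omega)
    rw [g1, mul_one] at this
    rw [hθ, ← this]
  obtain ⟨t, ht⟩ : ∃ t : ℝ, t = 1 - θ / k := ⟨_, rfl⟩
  have htpos : 0 < t := by
    rw [ht, sub_pos, div_lt_one hk0]; exact hθk
  have u0 : auxU b t 0 = 1 := by simp [auxU]
  have u1 : auxU b t 1 = θ / k := by simp [auxU, ht]
  have hrec : ∀ m, m + 1 ≤ D → 
      (p (m+1) 1 m : ℝ) * auxU b t m + (k - p (m+1) 1 m - p (m+1) 1 (m+2)) * auxU b t (m+1)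
        + (p (m+1) 1 (m+2) : ℝ) * auxU b t (m+2) = θ * auxU b t (m+1) := by
    intro m hm
    exact aux_rec b hbR D m α β k θ _ _ t hk0.ne' ht hkk hθ' (hc (m+1) hm) (hbi (m+1) hm)
  -- local sums
  have hloc : ∀ x y m, G.dist x y = m + 1 → ∀ g : ℕ → ℝ,
      ∑ z ∈ G.neighborFinset x, g (G.dist z y) = (p (m+1) 1 m : ℝ) * g m
        + (p (m+1) 1 (m+1) : ℝ) * g (m+1) + (p (m+1) 1 (m+2) : ℝ) * g (m+2) := by
    intro x y m h g
    have hm : m + 1 ≤ D := h ▸ hdrg.dist_le x y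
    rw [aux_sum hG x y m h g, hdrg.inter (m+1) 1 m hm (by omega) (by omega) x y h,
      hdrg.inter (m+1) 1 (m+1) hm (by omega) (by omega) x y h]
    by_cases hm2 : m + 2 ≤ D
    · rw [hdrg.inter (m+1) 1 (m+2) hm (by omega) (by omega) x y h]
    · have hmD : m + 1 = D := by omega
      have e1 : (p (m+1) 1 (m+2) : ℝ) = 0 := by
        have := hbi (m+1) hm
        rw [hmD, sub_self, zero_mul] at this
        rw [← this, hmD, ← hmD]
      have e2 : {z : V | G.dist x z = 1 ∧ G.dist y z = m+2} = ∅ := by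
        ext z
        have := hdrg.dist_le y z
        simp only [Set.mem_setOf_eq, Set.mem_empty_iff_false, iff_false]
        omega
      rw [e1, e2]; simp
  have ha : ∀ x y m, G.dist x y = m + 1 →
      (p (m+1) 1 (m+1) : ℝ) = k - p (m+1) 1 m - p (m+1) 1 (m+2) := by
    intro x y m h
    have := hloc x y m h (fun _ => 1)
    simp only [Finset.sum_const, aux_deg hdrg hD, nsmul_eq_mul, mul_one] at this
    rw [← hk] at this
    linarith
  obtain ⟨u, hu⟩ : ∃ u : ℕ → ℝ, u = auxU b t := ⟨_, rfl⟩
  rw [← hu] at u0 u1 hrec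
  have hAU : ∀ x y, ∑ z ∈ G.neighborFinset x, u (G.dist z y) = θ * u (G.dist x y) := by
    intro x y
    rcases hd : G.dist x y with _ | m
    · have hxy := hG.dist_eq_zero_iff.1 hd
      subst hxy
      have : ∀ z ∈ G.neighborFinset x, u (G.dist z x) = θ / k := by
        intro z hz
        have hadj : G.Adj x z := by simpa using hz
        rw [SimpleGraph.dist_eq_one_iff_adj.2 hadj.symm, u1]
      rw [Finset.sum_congr rfl this, Finset.sum_const, aux_deg hdrg hD, nsmul_eq_mul, u0, ← hk]
      field_simp
    · rw [hloc x y m hd u, ha x y m hd]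
      exact hrec m (hd ▸ hdrg.dist_le x y)
  have hswap : ∀ f : V → ℝ, ∑ x, ∑ z ∈ G.neighborFinset x, f z = k * ∑ z, f z := by
    intro f
    have : ∀ x, ∑ z ∈ G.neighborFinset x, f z = ∑ z, if G.Adj z x then f z else 0 := by
      intro x
      rw [← Finset.sum_filter]
      refine Finset.sum_congr ?_ fun _ _ => rfl
      ext z; simp [G.adj_comm]
    simp only [this]
    rw [Finset.sum_comm, Finset.mul_sum]
    refine Finset.sum_congr rfl fun z _ => ?_
    rw [← Finset.sum_filter, Finset.sum_const, nsmul_eq_mul, hk, ← aux_deg hdrg hD z]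
    congr 3
    ext w; simp
  have hcol : ∀ y, ∑ x, u (G.dist x y) = 0 := by
    intro y
    have e := hswap (fun z => u (G.dist z y))
    simp only [hAU, ← Finset.mul_sum] at e
    have : (k - θ) * ∑ x, u (G.dist x y) = 0 := by linarith
    rcases mul_eq_zero.1 this with h | h
    · linarith
    · exact h
  obtain ⟨s, hs⟩ : ∃ s : ℝ, s = ∑ z, u (G.dist x1 z) * u (G.dist z x1) := ⟨_, rfl⟩
  have hspos : 0 < s := by
    rw [hs]
    refine Finset.sum_pos' (fun z _ => ?_) ⟨x1, Finset.mem_univ _, ?_⟩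
    · rw [SimpleGraph.dist_comm]; exact mul_self_nonneg _
    · simp [u0]
  have hUU : ∀ x y, ∑ z, u (G.dist x z) * u (G.dist z y) = s * u (G.dist x y) := by
    have := aux_uniq hG θ
      (fun x y => ∑ z, u (G.dist x z) * u (G.dist z y) - s * u (G.dist x y)) ?_ ?_ ?_
    · intro x y
      have := this _ x y rfl
      linarith
    · intro x y x' y' h
      simp only [aux_sq hdrg, h]
    · intro x
      simp only [aux_sq hdrg, SimpleGraph.dist_self, u0] at hs ⊢
      rw [hs]; ring
    · intro x y
      simp only [Finset.sum_sub_distrib, ← Finset.mul_sum, hAU]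
      rw [Finset.sum_comm]
      simp only [← Finset.sum_mul, hAU, mul_assoc]
      rw [← Finset.mul_sum]
      ring
  refine ⟨⟨fun z => u (G.dist z x1), ?_, ?_⟩, ⟨u, ⟨u0, u1, ?_⟩, ?_⟩, ?_⟩
  · intro h
    have := congrFun h x1
    simp [u0] at this
  · ext x
    rw [SimpleGraph.adjMatrix_mulVec_apply, hAU]
    simp
  · intro i hi1 hi2
    obtain ⟨m, rfl⟩ : ∃ m, i = m + 1 := ⟨i - 1, by omega⟩
    obtain ⟨x, y, hxy⟩ := aux_real hdrg (D - (m+1)) (m+1) (by omega)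
    rw [ha x y m hxy]
    exact hrec m (by omega)
  · refine ⟨1 - 1 / (b:ℝ) - t, fun i hi1 hi2 => ?_⟩
    obtain ⟨m, rfl⟩ : ∃ m, i = m + 1 := ⟨i - 1, by omega⟩
    rw [hu]
    simp only [auxU, Nat.add_sub_cancel]
    rw [Finset.sum_range_succ']
    simp only [pow_succ, pow_zero, ← Finset.sum_mul]
    ring
  · -- the matrix
    set U : Matrix V V ℝ := Matrix.of fun x y => u (G.dist x y) with hUdef
    set J : Matrix V V ℝ := Matrix.of fun _ _ => 1 with hJdef
    set n : ℝ := (Fintype.card V : ℝ) with hn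
    have hnpos : 0 < n := by
      rw [hn]; exact_mod_cast Fintype.card_pos_iff.2 ⟨x1⟩
    have mUU : U * U = s • U := by
      ext x y; simp [Matrix.mul_apply, hUdef, hUU]
    have mJU : J * U = 0 := by
      ext x y; simp [Matrix.mul_apply, hUdef, hJdef, hcol]
    have mUJ : U * J = 0 := by
      ext x y
      have := hcol x
      simp only [SimpleGraph.dist_comm (v := x)] at this
      simp [Matrix.mul_apply, hUdef, hJdef, this]
    have mJJ : J * J = n • J := by
      ext x y; simp [Matrix.mul_apply, hJdef, hn]
    have mD : qDistMatrix G (b:ℝ) = t⁻¹ • (J - U) := by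
      ext x y
      simp only [qDistMatrix, hUdef, hJdef, hu, auxU, Matrix.of_apply, Matrix.smul_apply,
        Matrix.sub_apply, smul_eq_mul]
      field_simp
      ring
    have hcols : ∀ (P : Matrix V V ℝ) (a : ℝ), P ≠ 0 → qDistMatrix G (b:ℝ) * P = a • P →
        IsEigenval (qDistMatrix G (b:ℝ)) a := by
      intro P a hP hPa
      obtain ⟨x, y, hxy⟩ : ∃ x y, P x y ≠ 0 := by
        by_contra! hcon
        exact hP (by ext x y; simpa using hcon x y)
      refine ⟨fun z => P z y, fun h => hxy (congrFun h x), ?_⟩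
      ext z
      have := congrFun (congrFun hPa z) y
      simpa [Matrix.mul_apply, Matrix.mulVec, dotProduct] using this
    refine ⟨n / t, -(s / t), ?_, ?_, ?_, ?_⟩
    · have : 0 < n / t := by positivity
      have : 0 < s / t := by positivity
      linarith
    · positivity
    · have : 0 < s / t := by positivity
      linarith
    · ext η
      simp only [Set.mem_setOf_eq, Set.mem_insert_iff, Set.mem_singleton_iff]
      constructor
      · rintro ⟨v, hv, hev⟩
        rw [mD] at hev
        have hX : (J - U).mulVec v = (t * η) • v := by
          rw [mul_smul, ← hev, Matrix.smul_mulVec, smul_smul, mul_inv_cancel₀ htpos.ne', one_smul]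
        have hpoly : (J - U) * ((J - U) * (J - U)) + (s - n) • ((J - U) * (J - U))
            - (s * n) • (J - U) = 0 := by
          have hsq : (J - U) * (J - U) = n • J + s • U := by
            rw [sub_mul, mul_sub, mul_sub, mJJ, mJU, mUJ, mUU]; abel
          rw [hsq, sub_mul, mul_add, mul_add, Matrix.mul_smul, Matrix.mul_smul, Matrix.mul_smul,
            Matrix.mul_smul, mJJ, mJU, mUJ, mUU]
          module
        have h3 := congrArg (fun M => Matrix.mulVec M v) hpoly
        simp only [Matrix.add_mulVec, Matrix.sub_mulVec _ _ v, Matrix.smul_mulVec,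
          Matrix.zero_mulVec] at h3
        simp only [← Matrix.sub_mulVec, ← Matrix.mulVec_mulVec, hX, Matrix.mulVec_smul] at h3
        obtain ⟨x, hx⟩ := Function.ne_iff.1 hv
        have h4 := congrFun h3 x
        simp only [Pi.add_apply, Pi.sub_apply, Pi.smul_apply, smul_eq_mul, Pi.zero_apply] at h4 hx
        have h5 : (t * η - n) * ((t * η + s) * ((t * η) * v x)) = 0 := by linarith
        rcases mul_eq_zero.1 h5 with h | h
        · left; field_simp; linarith
        rcases mul_eq_zero.1 h with h | h
        · right; left; field_simp; linarith
        rcases mul_eq_zero.1 h with h | h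
        · right; right
          exact (mul_eq_zero.1 h).resolve_left htpos.ne'
        · exact absurd h hx
      · rintro (rfl | rfl | rfl)
        · refine hcols J _ ?_ ?_
          · intro h; have := congrFun (congrFun h x1) x1; simp [hJdef] at this
          · rw [mD, Matrix.smul_mul, sub_mul, mJJ, mUJ, sub_zero, smul_smul]; congr 1; ring
        · refine hcols U _ ?_ ?_
          · intro h; have := congrFun (congrFun h x1) x1; simp [hUdef, u0] at this
          · rw [mD, Matrix.smul_mul, sub_mul, mJU, mUU, zero_sub, smul_neg, smul_smul, ← neg_smul]
            congr 1; ring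
        · refine hcols (s • (1 : Matrix V V ℝ) - U - (s / n) • J) _ ?_ ?_
          · intro h
            have n1 : x1 ≠ y1 := by rintro rfl; simp at h1
            have n2 : x2 ≠ y2 := by rintro rfl; simp at h2
            have e1 := congrFun (congrFun h x1) y1
            have e2 := congrFun (congrFun h x2) y2
            simp [hUdef, hJdef, h1, n1] at e1
            simp [hUdef, hJdef, h2, n2] at e2
            have : u 1 = u 2 := by linarith
            simp [hu, auxU, Finset.sum_range_succ, htpos.ne'] at this
            exact hb0 (by simpa using this)
          · rw [mD, Matrix.smul_mul, zero_smul, mul_sub, mul_sub, sub_mul, sub_mul, sub_mul,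
              Matrix.mul_smul, Matrix.mul_smul, Matrix.mul_smul, Matrix.mul_smul, mJJ, mUJ, mUU, mJU,
              mul_one, mul_one, smul_smul, div_mul_cancel₀ _ hnpos.ne']
            simp
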